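/- For every instance I of the dynamic acknowledgment problem on [n] and every λ ∈ [0,1), there exists a feasible solution Y of I that is λ-stable, i.e., Δ(I,Y,t) ≤ 1−λ for all t ∈ [n], and that satisfies F(I,Y) ≤ (1/(1−λ))·opt(I). -/

import Mathlib

open Finset

/-- Waiting time from `t` until the first acknowledgment in `X` at or after `t` (`0` if none). -/
noncomputable def ackWait (X : Finset ℕ) (t : ℕ) : ℕ :=
  if h : (X.filter fun x => t ≤ x).Nonempty then (X.filter fun x => t ≤ x).min' h - t else 0

/-- Delay cost `D(I,X)` of solution `X` for the instance `p` on horizon `{a, …, b}`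
with delay parameter `d`. -/
noncomputable def delayCost (d : ℝ) (a b : ℕ) (p : ℕ → ℝ) (X : Finset ℕ) : ℝ :=
  (1 / d) * ∑ t ∈ Finset.Icc a b, p t * (ackWait X t : ℝ)

/-- Total cost `F(I,X) = |X| + D(I,X)`. -/
noncomputable def cost (d : ℝ) (a b : ℕ) (p : ℕ → ℝ) (X : Finset ℕ) : ℝ :=
  (X.card : ℝ) + delayCost d a b p X

/-- Feasibility of `X` for the instance `p` on horizon `{a,…,b}`: `X` is a nonempty subset of
the horizon and every time with positive demand has an acknowledgment at or after it. -/
def Feasible (a b : ℕ) (p : ℕ → ℝ) (X : Finset ℕ) : Prop :=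
  X.Nonempty ∧ X ⊆ Finset.Icc a b ∧ ∀ t ∈ Finset.Icc a b, 0 < p t → ∃ x ∈ X, t ≤ x

/-- Optimal cost `opt(I)` of the instance `p` on horizon `{a,…,b}`. -/
noncomputable def opt (d : ℝ) (a b : ℕ) (p : ℕ → ℝ) : ℝ :=
  sInf {c : ℝ | ∃ X : Finset ℕ, Feasible a b p X ∧ cost d a b p X = c}

/-- `Δ(I,Y,t) = D(I,Y) − D(I,Y ∪ {t})`. -/
noncomputable def delta (d : ℝ) (a b : ℕ) (p : ℕ → ℝ) (Y : Finset ℕ) (t : ℕ) : ℝ :=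
  delayCost d a b p Y - delayCost d a b p (insert t Y)

/-- Auxiliary error `τ([t1,t2], I, Î) = opt(O(I⟨t1,t2⟩,Î⟨t1,t2⟩)) − opt(U(I⟨t1,t2⟩,Î⟨t1,t2⟩))`. -/
noncomputable def auxErr (d : ℝ) (t1 t2 : ℕ) (p q : ℕ → ℝ) : ℝ :=
  opt d t1 t2 (fun t => max (p t) (q t)) - opt d t1 t2 (fun t => min (p t) (q t))

/-!
Charging `1 - λ` instead of `1` per acknowledgment, take a feasible `Y` of least total charge.
An additional acknowledgment is charged `1 - λ`, so by minimality it saves at most `1 - λ` of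
delay. The charge of any solution lies between `1 - λ` times its cost and its cost, so
`(1 - λ) F(I,Y)` is at most the charge of `Y`, hence at most that of any feasible `X`, which is
at most `F(I,X)`.
-/

/-- The cost `μ |X| + D(I,X)` of `X` for the instance `p` on horizon `{a,…,b}` when every
acknowledgment is charged `μ` instead of `1`. Its minimizers are stable and nearly optimal. -/
noncomputable def weightedCost (d : ℝ) (a b : ℕ) (p : ℕ → ℝ) (μ : ℝ) (X : Finset ℕ) : ℝ :=
  μ * (X.card : ℝ) + delayCost d a b p X

section

variable {d : ℝ} {a b : ℕ} {p : ℕ → ℝ} {μ : ℝ} {X Y : Finset ℕ}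

theorem delayCost_nonneg (hd : 0 ≤ d) (hp : ∀ t ∈ Icc a b, 0 ≤ p t) (X : Finset ℕ) :
    0 ≤ delayCost d a b p X :=
  mul_nonneg (one_div_nonneg.2 hd) <|
    sum_nonneg fun t ht => mul_nonneg (hp t ht) (Nat.cast_nonneg _)

theorem feasible_singleton (hab : a ≤ b) (p : ℕ → ℝ) : Feasible a b p {b} :=
  ⟨singleton_nonempty b, singleton_subset_iff.2 (right_mem_Icc.2 hab),
    fun _ ht _ => ⟨b, mem_singleton_self b, (mem_Icc.1 ht).2⟩⟩

theorem Feasible.insert (hY : Feasible a b p Y) {t : ℕ} (ht : t ∈ Icc a b) :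
    Feasible a b p (insert t Y) := by
  obtain ⟨-, hsub, hack⟩ := hY
  refine ⟨insert_nonempty t Y, insert_subset ht hsub, fun s hs hps => ?_⟩
  obtain ⟨x, hx, hsx⟩ := hack s hs hps
  exact ⟨x, mem_insert_of_mem hx, hsx⟩

theorem finite_setOf_feasible (a b : ℕ) (p : ℕ → ℝ) : {X | Feasible a b p X}.Finite :=
  (Icc a b).powerset.finite_toSet.subset fun _ hX => mem_coe.2 (mem_powerset.2 hX.2.1)

theorem exists_feasible_isMinOn (hab : a ≤ b) (f : Finset ℕ → ℝ) :
    ∃ Y, Feasible a b p Y ∧ IsMinOn f {X | Feasible a b p X} Y :=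
  Set.exists_min_image _ f (finite_setOf_feasible a b p) ⟨{b}, feasible_singleton hab p⟩

theorem le_opt {c : ℝ} (hY : Feasible a b p Y)
    (hc : ∀ X, Feasible a b p X → c ≤ cost d a b p X) : c ≤ opt d a b p := by
  refine le_csInf ⟨_, Y, hY, rfl⟩ ?_
  rintro _ ⟨X, hX, rfl⟩
  exact hc X hX

theorem weightedCost_le_cost (hμ : μ ≤ 1) : weightedCost d a b p μ X ≤ cost d a b p X :=
  add_le_add_left (mul_le_of_le_one_left (Nat.cast_nonneg _) hμ) _

theorem mul_cost_le_weightedCost (hX : 0 ≤ delayCost d a b p X) (hμ : μ ≤ 1) :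
    μ * cost d a b p X ≤ weightedCost d a b p μ X := by
  rw [cost, mul_add]
  exact add_le_add_right (mul_le_of_le_one_left hX hμ) _

theorem weightedCost_insert_le (hμ : 0 ≤ μ) (t : ℕ) :
    weightedCost d a b p μ (insert t Y) ≤ weightedCost d a b p μ Y + μ - delta d a b p Y t := by
  have hcard : ((insert t Y).card : ℝ) ≤ Y.card + 1 := mod_cast card_insert_le t Y
  have hcharge := mul_le_mul_of_nonneg_left hcard hμ
  unfold weightedCost delta
  linarith

theorem delta_le_of_isMinOn_weightedCost (hμ : 0 ≤ μ) (hY : Feasible a b p Y)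
    (hmin : IsMinOn (weightedCost d a b p μ) {X | Feasible a b p X} Y) {t : ℕ}
    (ht : t ∈ Icc a b) : delta d a b p Y t ≤ μ := by
  have hle : weightedCost d a b p μ Y ≤ weightedCost d a b p μ (insert t Y) :=
    hmin (hY.insert ht)
  linarith [weightedCost_insert_le (d := d) (a := a) (b := b) (p := p) (Y := Y) hμ t]

theorem mul_cost_le_opt_of_isMinOn_weightedCost (hμ : μ ≤ 1) (hY : Feasible a b p Y)
    (hD : 0 ≤ delayCost d a b p Y)
    (hmin : IsMinOn (weightedCost d a b p μ) {X | Feasible a b p X} Y) :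
    μ * cost d a b p Y ≤ opt d a b p :=
  le_opt hY fun X hX => calc
    μ * cost d a b p Y ≤ weightedCost d a b p μ Y := mul_cost_le_weightedCost hD hμ
    _ ≤ weightedCost d a b p μ X := hmin hX
    _ ≤ cost d a b p X := weightedCost_le_cost hμ

end

/-- for every instance on `[n]` and every `λ ∈ [0,1)`, there is a feasible
`λ`-stable solution `Y` (i.e. `Δ(I,Y,t) ≤ 1−λ` for all `t ∈ [n]`) with
`F(I,Y) ≤ (1/(1−λ))·opt(I)`. -/
theorem exists_stable_approx_solution (d : ℝ) (hd : 0 < d) (n : ℕ) (hn : 1 ≤ n)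
    (p : ℕ → ℝ) (hp : ∀ t, 0 ≤ p t)
    (lam : ℝ) (hlam0 : 0 ≤ lam) (hlam1 : lam < 1) :
    ∃ Y : Finset ℕ, Feasible 1 n p Y ∧
      (∀ t ∈ Finset.Icc 1 n, delta d 1 n p Y t ≤ 1 - lam) ∧
      cost d 1 n p Y ≤ (1 / (1 - lam)) * opt d 1 n p := by
  have hμ : 0 < 1 - lam := sub_pos.2 hlam1
  obtain ⟨Y, hY, hmin⟩ := exists_feasible_isMinOn hn (weightedCost d 1 n p (1 - lam))
  refine ⟨Y, hY, fun t ht => delta_le_of_isMinOn_weightedCost hμ.le hY hmin ht, ?_⟩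
  have hopt : (1 - lam) * cost d 1 n p Y ≤ opt d 1 n p :=
    mul_cost_le_opt_of_isMinOn_weightedCost (sub_le_self 1 hlam0) hY
      (delayCost_nonneg hd.le (fun t _ => hp t) Y) hmin
  rwa [one_div, le_inv_mul_iff₀ hμ]
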